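/- For every Lusztig datum a ∈ ℬ and every 1 ≤ i ≤ n with ε_i^*(a) > 0: M_K(ẽ_i^* a) = M_K(a) for every K ∈ M_n^× with i ∈ K or i+1 ∉ K, and M_{[i+1,n+1]}(ẽ_i^* a) = M_{[i+1,n+1]}(a) + 1. (Hence Ψ intertwines ẽ_i^* on ℬ with the raising Kashiwara operator on e-BZ data.) -/

import Mathlib

/-- The set of Lusztig data: `a : Π → ℤ_{≥0}`, modeled as an integer-valued function on
`ℤ × ℤ` that is nonnegative everywhere and vanishes off `Π = {(k,l) : 1 ≤ k < l ≤ n+1}`. -/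
def IsLusztig (n : ℕ) (a : ℤ → ℤ → ℤ) : Prop :=
  (∀ k l : ℤ, 0 ≤ a k l) ∧ ∀ k l : ℤ, ¬(1 ≤ k ∧ k < l ∧ l ≤ (n : ℤ) + 1) → a k l = 0

/-- The `p`-th smallest element (1-indexed) `k_p` of a Maya diagram `K`. -/
def kth (K : Finset ℕ) (p : ℕ) : ℕ := (K.sort (· ≤ ·)).getD (p - 1) 0

/-- `C = (c_{p,q})_{1 ≤ p ≤ q ≤ l}` (with `l = |K|`) is a `K`-tableau: an upper-triangular
integer matrix with `c_{p,p} = k_p`, `c_{p,q} ≤ c_{p,q+1}` and `c_{p,q} < c_{p+1,q}`. -/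
def IsKTab (K : Finset ℕ) (c : ℕ → ℕ → ℤ) : Prop :=
  (∀ p : ℕ, 1 ≤ p → p ≤ K.card → c p p = (kth K p : ℤ)) ∧
  (∀ p q : ℕ, 1 ≤ p → p ≤ q → q + 1 ≤ K.card → c p q ≤ c p (q + 1)) ∧
  (∀ p q : ℕ, 1 ≤ p → p + 1 ≤ q → q ≤ K.card → c p q < c (p + 1) q)

/-- `Σ_{1 ≤ p < q ≤ l} a_{c_{p,q}, c_{p,q}+(q−p)}`. -/
def tabSum (a : ℤ → ℤ → ℤ) (K : Finset ℕ) (c : ℕ → ℕ → ℤ) : ℤ :=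
  ∑ p ∈ Finset.Icc 1 K.card, ∑ q ∈ Finset.Icc (p + 1) K.card,
    a (c p q) (c p q + ((q : ℤ) - (p : ℤ)))

/-- `M_K(a) = −Σ_{j=1}^{l} Σ_{i=1}^{k_j−1} a_{i,k_j} + min{ tabSum over K-tableaux }`,
for `K ∈ M_n^×`, with the conventions `M_∅(a) = M_{[1,n+1]}(a) = 0`. -/
noncomputable def MK (n : ℕ) (a : ℤ → ℤ → ℤ) (K : Finset ℕ) : ℤ :=
  if K = ∅ ∨ K = Finset.Icc 1 (n + 1) then 0
  else
    -(∑ k ∈ K, ∑ s ∈ Finset.Icc 1 (k - 1), a (s : ℤ) (k : ℤ)) +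
      sInf {z : ℤ | ∃ c : ℕ → ℕ → ℤ, IsKTab K c ∧ z = tabSum a K c}
/-- `A_l^{*(i)}(a) = Σ_{t=l+1}^{n+1} (a_{i,t} − a_{i+1,t+1})`. -/
def Astar (n : ℕ) (a : ℤ → ℤ → ℤ) (i l : ℕ) : ℤ :=
  ∑ t ∈ Finset.Icc (l + 1) (n + 1), (a (i : ℤ) (t : ℤ) - a ((i : ℤ) + 1) ((t : ℤ) + 1))

/-- `ε_i^*(a) = max{A_i^{*(i)}(a),…,A_n^{*(i)}(a)}`. -/
def epsStar (n : ℕ) (a : ℤ → ℤ → ℤ) (i : ℕ) : ℤ :=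
  ((Finset.Icc i n).image (Astar n a i)).max.unbotD 0

/-- `l_f(a,i)`: the minimal `l ∈ [i,n]` with `A_l^{*(i)}(a) = ε_i^*(a)`. -/
def lfStar (n : ℕ) (a : ℤ → ℤ → ℤ) (i : ℕ) : ℕ :=
  (((Finset.Icc i n).filter fun l => Astar n a i l = epsStar n a i).min).untopD 0

/-- `l_e(a,i)`: the maximal `l ∈ [i,n]` with `A_l^{*(i)}(a) = ε_i^*(a)`. -/
def leStar (n : ℕ) (a : ℤ → ℤ → ℤ) (i : ℕ) : ℕ :=
  (((Finset.Icc i n).filter fun l => Astar n a i l = epsStar n a i).max).unbotD 0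

/-- The operator `f̃_i^*`: increase `a_{i,l_f+1}` by 1 and decrease `a_{i+1,l_f+1}` by 1
(the latter discarded when `l_f = i`, the entry `(i+1,i+1)` being out of range). -/
def ftilStar (n : ℕ) (a : ℤ → ℤ → ℤ) (i : ℕ) : ℤ → ℤ → ℤ := fun k l =>
  if k = (i : ℤ) ∧ l = (lfStar n a i : ℤ) + 1 then a k l + 1
  else if k = (i : ℤ) + 1 ∧ l = (lfStar n a i : ℤ) + 1 ∧ (i : ℤ) < (lfStar n a i : ℤ) then
    a k l - 1
  else a k l

/-- The operator `ẽ_i^*` (for `ε_i^*(a) > 0`): decrease `a_{i,l_e+1}` by 1 and increase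
`a_{i+1,l_e+1}` by 1 (the latter discarded when `l_e = i`). -/
def etilStar (n : ℕ) (a : ℤ → ℤ → ℤ) (i : ℕ) : ℤ → ℤ → ℤ := fun k l =>
  if k = (i : ℤ) ∧ l = (leStar n a i : ℤ) + 1 then a k l - 1
  else if k = (i : ℤ) + 1 ∧ l = (leStar n a i : ℤ) + 1 ∧ (i : ℤ) < (leStar n a i : ℤ) then
    a k l + 1
  else a k l

/-!
Write `l_e(a, i) = i + m`. For a fixed tableau `C`, passing from `a` to `ẽ_i^* a` changes the
quantity minimised in `M_K` by `-[i ∈ D_{m+1}] + [i + 1 ∈ D_m]`, where `D_d` is the set of entries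
of `C` on the `d`-th superdiagonal; these entries are distinct.

Replacing a run of entries `i` by `i + 1` (or conversely) in a row of `C`, on the superdiagonals
`d + 1, …, e`, changes the sum by a difference of `A_{i+d}^*` and `A_{i+e}^*`. If `i ∈ D_{m+1}` but
`i + 1 ∉ D_m`, the run of `i` starting at that entry can be raised, which strictly lowers the sum
because `i + m` is the last maximiser of `A^*`. If `i + 1 ∈ D_m` but `i ∉ D_{m+1}`, the run of
`i + 1` ending at that entry can be lowered, which does not increase the sum because `i + m` is a
maximiser; the run cannot reach the main diagonal since `i ∈ K` or `i + 1 ∉ K`. Hence the two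
minima agree. For `K = [i + 1, n + 1]` there is only one tableau, `c_{p,q} = i + p`.
-/

/-! ### The increasing enumeration of `K` -/

section Enumeration

variable {K : Finset ℕ} {p : ℕ}

theorem kth_eq_orderEmbOfFin (hp : 1 ≤ p) (hpK : p ≤ K.card) :
    kth K p = K.orderEmbOfFin rfl ⟨p - 1, by omega⟩ := by
  rw [kth, Finset.orderEmbOfFin_apply, List.getD_eq_getElem _ _ (by rw [Finset.length_sort]; omega)]
  rfl

theorem kth_mem (hp : 1 ≤ p) (hpK : p ≤ K.card) : kth K p ∈ K := by
  rw [kth_eq_orderEmbOfFin hp hpK]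
  exact Finset.orderEmbOfFin_mem _ _ _

theorem kth_strictMonoOn (K : Finset ℕ) : StrictMonoOn (kth K) (Set.Icc 1 K.card) := by
  intro p hp q hq hpq
  rw [Set.mem_Icc] at hp hq
  rw [kth_eq_orderEmbOfFin hp.1 hp.2, kth_eq_orderEmbOfFin hq.1 hq.2]
  exact (K.orderEmbOfFin rfl).strictMono (Fin.mk_lt_mk.2 (by omega))

theorem image_kth (K : Finset ℕ) : (Finset.Icc 1 K.card).image (kth K) = K := by
  refine Finset.eq_of_subset_of_card_le (Finset.image_subset_iff.2 fun p hp ↦ ?_) ?_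
  · rw [Finset.mem_Icc] at hp
    exact kth_mem hp.1 hp.2
  · rw [Finset.card_image_of_injOn (by simpa using (kth_strictMonoOn K).injOn), Nat.card_Icc,
      Nat.add_sub_cancel]

theorem exists_kth_eq_of_kth_eq_succ {x : ℕ} (hp : 1 ≤ p) (hpK : p ≤ K.card)
    (hpx : kth K p = x + 1) (hx : x ∈ K) : ∃ r, 1 ≤ r ∧ p = r + 1 ∧ kth K r = x := by
  rw [← image_kth K, Finset.mem_image] at hx
  obtain ⟨r, hr, rfl⟩ := hx
  have hr := Finset.mem_Icc.1 hr
  have hrp : r < p := (kth_strictMonoOn K).lt_iff_lt hr ⟨hp, hpK⟩ |>.1 (by omega)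
  refine ⟨r, hr.1, ?_, rfl⟩
  by_contra hne
  have h₁ := kth_strictMonoOn K hr (show r + 1 ∈ Set.Icc 1 K.card from ⟨by omega, by omega⟩)
    (Nat.lt_succ_self r)
  have h₂ := kth_strictMonoOn K (show r + 1 ∈ Set.Icc 1 K.card from ⟨by omega, by omega⟩)
    ⟨hp, hpK⟩ (show r + 1 < p by omega)
  omega

theorem kth_Icc_succ {x y : ℕ} (hp : 1 ≤ p) (hpy : x + p ≤ y) :
    kth (Finset.Icc (x + 1) y) p = x + p := by
  have hcard : (Finset.Icc (x + 1) y).card = y - x := by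
    rw [Nat.card_Icc, Nat.add_sub_add_right]
  have h := Finset.orderEmbOfFin_unique (s := Finset.Icc (x + 1) y) rfl
    (f := fun j ↦ x + 1 + (j : ℕ)) (fun j ↦ by rw [Finset.mem_Icc]; omega)
    (fun j k hjk ↦ Nat.add_lt_add_left hjk _)
  rw [kth_eq_orderEmbOfFin hp (by omega), ← h]
  dsimp only
  omega

end Enumeration

/-! ### Tableaux and their superdiagonals -/

theorem exists_isKTab (K : Finset ℕ) : ∃ c, IsKTab K c := by
  refine ⟨fun p _ ↦ kth K p, fun p _ _ ↦ rfl, fun p q _ _ _ ↦ le_rfl, fun p q hp hpq hq ↦ ?_⟩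
  exact Nat.cast_lt.2
    (kth_strictMonoOn K ⟨hp, by omega⟩ ⟨by omega, by omega⟩ (Nat.lt_succ_self p))

/-- The set of entries `c_{p,p+d}` of a `K`-tableau on its `d`-th superdiagonal. -/
def tabDiag (K : Finset ℕ) (c : ℕ → ℕ → ℤ) (d : ℕ) : Finset ℤ :=
  (Finset.Icc 1 (K.card - d)).image fun p ↦ c p (p + d)

theorem mem_tabDiag {K : Finset ℕ} {c : ℕ → ℕ → ℤ} {d : ℕ} {x : ℤ} :
    x ∈ tabDiag K c d ↔ ∃ p, 1 ≤ p ∧ p + d ≤ K.card ∧ c p (p + d) = x := by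
  simp only [tabDiag, Finset.mem_image, Finset.mem_Icc]
  exact exists_congr fun p ↦ ⟨fun h ↦ ⟨h.1.1, by omega, h.2⟩, fun h ↦ ⟨⟨h.1, by omega⟩, h.2.2⟩⟩

namespace IsKTab

variable {K : Finset ℕ} {c : ℕ → ℕ → ℤ} {p q d m : ℕ} {x : ℤ}

theorem row_le (hc : IsKTab K c) (hp : 1 ≤ p) (hpq : p ≤ q) {q' : ℕ} (hqq' : q ≤ q')
    (hq' : q' ≤ K.card) : c p q ≤ c p q' := by
  induction q', hqq' using Nat.le_induction with
  | base => exact le_rfl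
  | succ r hqr ih => exact (ih (by omega)).trans (hc.2.1 p r hp (by omega) hq')

theorem col_add_le (hc : IsKTab K c) (hp : 1 ≤ p) (hpq : p + d ≤ q) (hq : q ≤ K.card) :
    c p q + d ≤ c (p + d) q := by
  induction d with
  | zero => simp
  | succ d ih =>
    have hstep := hc.2.2 (p + d) q (by omega) (by omega) hq
    have := ih (by omega)
    rw [← Nat.add_assoc]
    omega

theorem kth_le (hc : IsKTab K c) (hp : 1 ≤ p) (hpK : p + d ≤ K.card) :
    (kth K p : ℤ) ≤ c p (p + d) :=
  hc.1 p hp (by omega) ▸ hc.row_le hp le_rfl (Nat.le_add_right p d) hpK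

theorem add_le_kth (hc : IsKTab K c) (hp : 1 ≤ p) (hpK : p + d ≤ K.card) :
    c p (p + d) + d ≤ kth K (p + d) :=
  hc.1 (p + d) (by omega) hpK ▸ hc.col_add_le hp le_rfl hpK

theorem tabDiag_strictMonoOn (hc : IsKTab K c) (d : ℕ) :
    StrictMonoOn (fun p ↦ c p (p + d)) (Set.Icc 1 (K.card - d)) := by
  intro p hp r hr hpr
  rw [Set.mem_Icc] at hp hr
  obtain ⟨t, rfl⟩ := Nat.exists_eq_add_of_lt hpr
  calc c p (p + d) ≤ c p (p + t + 1 + d) := hc.row_le hp.1 (by omega) (by omega) (by omega)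
    _ < c p (p + t + 1 + d) + (t + 1 : ℕ) := by omega
    _ ≤ c (p + t + 1) (p + t + 1 + d) := hc.col_add_le hp.1 (by omega) (by omega)

theorem tabDiag_zero (hc : IsKTab K c) : tabDiag K c 0 = K.image (Nat.cast : ℕ → ℤ) := by
  conv_rhs => rw [← image_kth K, Finset.image_image]
  refine Finset.image_congr fun p hp ↦ ?_
  rw [Finset.coe_Icc, Set.mem_Icc] at hp
  exact hc.1 p hp.1 hp.2

theorem natCast_mem_tabDiag_zero (hc : IsKTab K c) (k : ℕ) : (k : ℤ) ∈ tabDiag K c 0 ↔ k ∈ K := by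
  simp [hc.tabDiag_zero]

theorem exists_le_iff_le (hc : IsKTab K c) (hp : 1 ≤ p) (hpK : p ≤ K.card) (hx : c p p ≤ x) :
    ∃ d, p + d ≤ K.card ∧ ∀ t, p + t ≤ K.card → (c p (p + t) ≤ x ↔ t ≤ d) := by
  have hle := Nat.findGreatest_le (P := fun t ↦ c p (p + t) ≤ x) (K.card - p)
  have hspec := Nat.findGreatest_spec (P := fun t ↦ c p (p + t) ≤ x) (Nat.zero_le (K.card - p)) hx
  refine ⟨Nat.findGreatest (fun t ↦ c p (p + t) ≤ x) (K.card - p), by omega, fun t ht ↦ ?_⟩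
  exact ⟨fun h ↦ Nat.le_findGreatest (by omega) h,
    fun h ↦ (hc.row_le hp (by omega) (by omega) (by omega)).trans hspec⟩

theorem lt_of_notMem_tabDiag_succ (hc : IsKTab K c) (hp : 1 ≤ p) (hpK : p + 1 + m ≤ K.card)
    (hx : c (p + 1) (p + 1 + m) = x + 1) (hnot : x ∉ tabDiag K c (m + 1)) (hpq : p ≤ q)
    (hq : q ≤ p + 1 + m) : c p q < x := by
  have hrow := hc.row_le hp hpq hq hpK
  have hcol := hc.2.2 p (p + 1 + m) hp (by omega) hpK
  have hne : c p (p + 1 + m) ≠ x := fun h ↦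
    hnot (mem_tabDiag.2 ⟨p, hp, by omega, by rw [← h, Nat.add_right_comm, Nat.add_assoc]⟩)
  omega

theorem lt_of_notMem_tabDiag (hc : IsKTab K c) (hp : 1 ≤ p) (hx : c p (p + (m + 1)) = x)
    (hnot : x + 1 ∉ tabDiag K c m) (hpq : p + (m + 1) ≤ q) (hq : q ≤ K.card) :
    x + 1 < c (p + 1) q := by
  have hrow := hc.row_le (Nat.le_add_left 1 p) (by omega) hpq hq
  have hcol := hc.2.2 p (p + (m + 1)) hp (by omega) (by omega)
  have hne : c (p + 1) (p + (m + 1)) ≠ x + 1 := fun h ↦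
    hnot (mem_tabDiag.2 ⟨p + 1, by omega, by omega, by rw [← h, Nat.add_right_comm, Nat.add_assoc]⟩)
  omega

theorem diag_le_of_notMem_tabDiag_succ (hc : IsKTab K c) {i : ℕ} (hK : i ∈ K ∨ i + 1 ∉ K)
    (hp : 1 ≤ p) (hpK : p + m ≤ K.card) (hx : c p (p + m) = i + 1)
    (hnot : (i : ℤ) ∉ tabDiag K c (m + 1)) : c p p ≤ i := by
  have hle := hc.row_le hp le_rfl (Nat.le_add_right p m) hpK
  suffices c p p ≠ i + 1 by omega
  intro hdiag
  rw [hc.1 p hp (by omega)] at hdiag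
  have hkth : kth K p = i + 1 := by exact_mod_cast hdiag
  have hi : i ∈ K := hK.resolve_right (not_not_intro (hkth ▸ kth_mem hp (by omega)))
  obtain ⟨r, hr, rfl, hri⟩ := exists_kth_eq_of_kth_eq_succ hp (by omega) hkth hi
  have hlt := hc.lt_of_notMem_tabDiag_succ hr hpK hx hnot le_rfl (by omega)
  rw [hc.1 r hr (by omega), hri] at hlt
  exact hlt.false

theorem eq_add_of_Icc {j N : ℕ} (hc : IsKTab (Finset.Icc (j + 1) N) c) (hp : 1 ≤ p)
    (hpd : j + (p + d) ≤ N) : c p (p + d) = j + p := by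
  have hcard : p + d ≤ (Finset.Icc (j + 1) N).card := by rw [Nat.card_Icc]; omega
  have hlow := hc.kth_le hp hcard
  have hupp := hc.add_le_kth hp hcard
  rw [kth_Icc_succ hp (by omega)] at hlow
  rw [kth_Icc_succ (by omega) hpd] at hupp
  omega

end IsKTab

/-! ### The quantity minimised in `M_K` -/

/-- The term `Σ_{k ∈ K} Σ_{s < k} a_{s,k}` subtracted in the definition of `M_K(a)`. -/
def colSum (a : ℤ → ℤ → ℤ) (K : Finset ℕ) : ℤ :=
  ∑ k ∈ K, ∑ s ∈ Finset.Icc 1 (k - 1), a (s : ℤ) (k : ℤ)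

/-- The quantity whose minimum over all `K`-tableaux is `M_K(a)`. -/
def tabValue (a : ℤ → ℤ → ℤ) (K : Finset ℕ) (c : ℕ → ℕ → ℤ) : ℤ :=
  -colSum a K + tabSum a K c

section Value

variable {a b : ℤ → ℤ → ℤ} {K : Finset ℕ} {c : ℕ → ℕ → ℤ}

theorem tabValue_add : tabValue (a + b) K c = tabValue a K c + tabValue b K c := by
  simp only [tabValue, colSum, tabSum, Pi.add_apply, Finset.sum_add_distrib]
  ring

theorem tabValue_sub : tabValue (a - b) K c = tabValue a K c - tabValue b K c := by
  simp only [tabValue, colSum, tabSum, Pi.sub_apply, Finset.sum_sub_distrib]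
  ring

theorem tabSum_eq_sum_tabDiag (hc : IsKTab K c) :
    tabSum a K c = ∑ d ∈ Finset.Icc 1 K.card, ∑ x ∈ tabDiag K c d, a x (x + d) := by
  have hdiag (d : ℕ) : ∑ x ∈ tabDiag K c d, a x (x + d) =
      ∑ p ∈ Finset.Icc 1 (K.card - d), a (c p (p + d)) (c p (p + d) + d) :=
    Finset.sum_image (by simpa using (hc.tabDiag_strictMonoOn d).injOn)
  simp only [tabSum, hdiag, Finset.sum_sigma']
  refine Finset.sum_nbij' (fun z ↦ ⟨z.2 - z.1, z.1⟩) (fun z ↦ ⟨z.2, z.2 + z.1⟩) ?_ ?_ ?_ ?_ ?_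
  all_goals
    rintro ⟨p, q⟩ hpq
    simp only [Finset.mem_sigma, Finset.mem_Icc] at hpq ⊢
  · omega
  · omega
  · rw [Nat.add_sub_cancel' (by omega)]
  · rw [Nat.add_sub_cancel_left]
  · rw [Nat.add_sub_cancel' (by omega), Nat.cast_sub (by omega)]

theorem tabSum_single (hc : IsKTab K c) (x : ℤ) {d : ℕ} (hd : 1 ≤ d) :
    tabSum (Pi.single x (Pi.single (x + d) 1)) K c = if x ∈ tabDiag K c d then 1 else 0 := by
  have hterm (e : ℕ) (z : ℤ) : (Pi.single x (Pi.single (x + d) 1) : ℤ → ℤ → ℤ) z (z + e) =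
      if z = x then (if e = d then 1 else 0) else 0 := by
    by_cases hz : z = x
    · subst hz
      simp [Pi.single_apply]
    · simp [hz]
  have hmem : x ∈ tabDiag K c d → d ≤ K.card := fun h ↦ by
    obtain ⟨p, -, hp, -⟩ := mem_tabDiag.1 h
    omega
  simp only [tabSum_eq_sum_tabDiag hc, hterm, Finset.sum_ite_eq']
  rw [Finset.sum_eq_single d (fun e _ he ↦ by simp [he])]
  · simp
  · intro h
    rw [if_neg fun hx ↦ h (Finset.mem_Icc.2 ⟨hd, hmem hx⟩)]

theorem colSum_single (K : Finset ℕ) {x y : ℕ} (hx : 1 ≤ x) (hxy : x < y) :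
    colSum (Pi.single (x : ℤ) (Pi.single (y : ℤ) 1)) K = if y ∈ K then 1 else 0 := by
  have hterm (s k : ℕ) : (Pi.single (x : ℤ) (Pi.single (y : ℤ) 1) : ℤ → ℤ → ℤ) s k =
      if s = x then (if k = y then 1 else 0) else 0 := by
    by_cases hs : s = x <;> simp [hs, Pi.single_apply]
  simp only [colSum, hterm, Finset.sum_ite_eq', Finset.mem_Icc]
  rw [← Finset.sum_ite_eq' K y fun _ ↦ (1 : ℤ)]
  refine Finset.sum_congr rfl fun k _ ↦ ?_
  split_ifs <;> omega

theorem tabValue_single (hc : IsKTab K c) {x d : ℕ} (hx : 1 ≤ x) (hd : 1 ≤ d) :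
    tabValue (Pi.single (x : ℤ) (Pi.single ((x : ℤ) + d) 1)) K c =
      (if (x : ℤ) ∈ tabDiag K c d then 1 else 0) - if x + d ∈ K then 1 else 0 := by
  have hcol := colSum_single K hx (show x < x + d by omega)
  rw [Nat.cast_add] at hcol
  rw [tabValue, tabSum_single hc x hd, hcol]
  ring

theorem bddBelow_tabSum (a : ℤ → ℤ → ℤ) (K : Finset ℕ) :
    BddBelow {z : ℤ | ∃ c : ℕ → ℕ → ℤ, IsKTab K c ∧ z = tabSum a K c} := by
  have hentry (p q : ℕ) : ∃ b, ∀ x ∈ Set.Icc (kth K p : ℤ) (kth K q), b ≤ a x (x + (q - p)) := by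
    obtain ⟨b, hb⟩ := ((Set.finite_Icc (kth K p : ℤ) (kth K q)).image
      fun x ↦ a x (x + (q - p))).bddBelow
    exact ⟨b, fun x hx ↦ hb (Set.mem_image_of_mem _ hx)⟩
  choose b hb using hentry
  refine ⟨∑ p ∈ Finset.Icc 1 K.card, ∑ q ∈ Finset.Icc (p + 1) K.card, b p q, ?_⟩
  rintro _ ⟨c, hc, rfl⟩
  refine Finset.sum_le_sum fun p hp ↦ Finset.sum_le_sum fun q hq ↦ hb p q _ ?_
  rw [Finset.mem_Icc] at hp hq
  obtain ⟨d, rfl⟩ := Nat.exists_eq_add_of_le (show p ≤ q by omega)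
  have hupp := hc.add_le_kth hp.1 hq.2
  exact ⟨hc.kth_le hp.1 hq.2, by omega⟩

theorem isLeast_MK {n : ℕ} (hne : K ≠ ∅) (hfull : K ≠ Finset.Icc 1 (n + 1)) :
    IsLeast (tabValue a K '' {c | IsKTab K c}) (MK n a K) := by
  have hnonempty : {z : ℤ | ∃ c : ℕ → ℕ → ℤ, IsKTab K c ∧ z = tabSum a K c}.Nonempty :=
    let ⟨c, hc⟩ := exists_isKTab K
    ⟨_, c, hc, rfl⟩
  rw [MK, if_neg (not_or_intro hne hfull)]
  constructor
  · obtain ⟨c, hc, hmin⟩ := Int.csInf_mem hnonempty (bddBelow_tabSum a K)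
    exact ⟨c, hc, by rw [hmin, tabValue, colSum]⟩
  · rintro _ ⟨c, hc, rfl⟩
    exact add_le_add_right (csInf_le (bddBelow_tabSum a K) ⟨c, hc, rfl⟩) _

theorem MK_le_MK_add {n : ℕ} (hne : K ≠ ∅) (hfull : K ≠ Finset.Icc 1 (n + 1)) (z : ℤ)
    (h : ∀ c, IsKTab K c → ∃ c', IsKTab K c' ∧ tabValue a K c' ≤ tabValue b K c + z) :
    MK n a K ≤ MK n b K + z := by
  obtain ⟨c, hc, hmin⟩ := (isLeast_MK (a := b) hne hfull).1
  obtain ⟨c', hc', hle⟩ := h c hc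
  exact ((isLeast_MK hne hfull).2 ⟨c', hc', rfl⟩).trans (hmin ▸ hle)

end Value

/-! ### The operator `ẽ_i^*` -/

section Operator

variable {n : ℕ} {a : ℤ → ℤ → ℤ} {i : ℕ}

theorem Astar_eq_add {l : ℕ} (hl : l ≤ n) :
    Astar n a i l = a i (l + 1) - a (i + 1) (l + 1 + 1) + Astar n a i (l + 1) := by
  rw [Astar, ← Finset.insert_Icc_add_one_left_eq_Icc (Nat.add_le_add_right hl 1),
    Finset.sum_insert (by simp), Astar]
  push_cast
  rfl

theorem Astar_sub_Astar {d e : ℕ} (hde : d ≤ e) (he : i + e ≤ n + 1) :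
    Astar n a i (i + d) - Astar n a i (i + e) =
      ∑ t ∈ Finset.Ioc d e, (a i (i + t) - a (i + 1) (i + 1 + t)) := by
  induction e, hde using Nat.le_induction with
  | base => simp
  | succ e hde ih =>
    have hstep := Astar_eq_add (a := a) (i := i) (show i + e ≤ n by omega)
    rw [← Finset.insert_Ioc_right_eq_Ioc_add_one hde, Finset.sum_insert (by simp),
      ← ih (by omega), hstep, ← Nat.add_assoc]
    push_cast
    ring_nf

theorem exists_Astar_eq_epsStar (hpos : 0 < epsStar n a i) :
    ∃ l ∈ Finset.Icc i n, Astar n a i l = epsStar n a i := by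
  rw [← Finset.mem_image]
  by_cases hne : ((Finset.Icc i n).image (Astar n a i)).Nonempty
  · obtain ⟨e, he⟩ := Finset.max_of_nonempty hne
    rw [epsStar, he]
    exact Finset.mem_of_max he
  · rw [Finset.not_nonempty_iff_eq_empty] at hne
    simp [epsStar, hne] at hpos

theorem Astar_le_epsStar {l : ℕ} (hil : i ≤ l) (hln : l ≤ n) :
    Astar n a i l ≤ epsStar n a i := by
  have hmem := Finset.mem_image_of_mem (Astar n a i) (Finset.mem_Icc.2 ⟨hil, hln⟩)
  obtain ⟨e, he⟩ := Finset.max_of_mem hmem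
  rw [epsStar, he]
  exact Finset.le_max_of_eq hmem he

theorem leStar_isGreatest (hpos : 0 < epsStar n a i) :
    IsGreatest {l | l ∈ Finset.Icc i n ∧ Astar n a i l = epsStar n a i} (leStar n a i) := by
  obtain ⟨l, hl, hle⟩ := exists_Astar_eq_epsStar hpos
  have hmem {k : ℕ} : k ∈ (Finset.Icc i n).filter (fun l ↦ Astar n a i l = epsStar n a i) ↔
      k ∈ Finset.Icc i n ∧ Astar n a i k = epsStar n a i := Finset.mem_filter
  obtain ⟨L, hL⟩ := Finset.max_of_mem (hmem.2 ⟨hl, hle⟩)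
  rw [leStar, hL]
  exact ⟨hmem.1 (Finset.mem_of_max hL), fun k hk ↦ Finset.le_max_of_eq (hmem.2 hk) hL⟩

theorem Astar_lt_epsStar_of_leStar_lt (hpos : 0 < epsStar n a i) {l : ℕ}
    (hl : leStar n a i < l) (hln : l ≤ n + 1) : Astar n a i l < epsStar n a i := by
  have hgreatest := leStar_isGreatest hpos
  have hi := (Finset.mem_Icc.1 hgreatest.1.1).1
  obtain hn | rfl := Nat.le_or_eq_of_le_succ hln
  · refine (Astar_le_epsStar (by omega) hn).lt_of_ne fun heq ↦ ?_
    exact hl.not_ge (hgreatest.2 ⟨Finset.mem_Icc.2 ⟨by omega, hn⟩, heq⟩)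
  · simpa [Astar] using hpos

theorem etilStar_eq_add_single (n : ℕ) (a : ℤ → ℤ → ℤ) (i : ℕ) :
    etilStar n a i = a - Pi.single (i : ℤ) (Pi.single ((leStar n a i : ℤ) + 1) 1) +
      if i < leStar n a i then Pi.single ((i : ℤ) + 1) (Pi.single ((leStar n a i : ℤ) + 1) 1)
      else 0 := by
  ext k l
  by_cases hL : i < leStar n a i
  all_goals
    simp only [etilStar, hL, Nat.cast_lt, Pi.add_apply, Pi.sub_apply, Pi.single_apply, ite_apply,
      if_true, if_false, and_true, and_false, Pi.zero_apply]
    split_ifs <;> omega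

theorem tabValue_etilStar (hi : 1 ≤ i) {m : ℕ} (hL : leStar n a i = i + m) {K : Finset ℕ}
    {c : ℕ → ℕ → ℤ} (hc : IsKTab K c) :
    tabValue (etilStar n a i) K c = tabValue a K c
      - (if (i : ℤ) ∈ tabDiag K c (m + 1) then 1 else 0)
      + (if (i : ℤ) + 1 ∈ tabDiag K c m then 1 else 0) := by
  have hdec := tabValue_single hc hi (Nat.le_add_left 1 m)
  have hinc := tabValue_single (d := m) hc (Nat.le_add_left 1 i)
  have hcol : (i : ℤ) + ((m + 1 : ℕ) : ℤ) = ((i + m : ℕ) : ℤ) + 1 := by push_cast; ring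
  have hcol' : ((i + 1 : ℕ) : ℤ) + m = ((i + m : ℕ) : ℤ) + 1 := by push_cast; ring
  rw [hcol] at hdec
  rw [hcol', Nat.cast_succ, Nat.add_right_comm] at hinc
  rw [etilStar_eq_add_single, hL, tabValue_add, tabValue_sub, hdec]
  obtain rfl | hm := Nat.eq_zero_or_pos m
  · have hdiag := hc.natCast_mem_tabDiag_zero (i + 1)
    rw [Nat.cast_succ] at hdiag
    have hzero : tabValue 0 K c = 0 := by simp [tabValue, colSum, tabSum]
    simp only [add_zero, zero_add, lt_irrefl, if_false, hzero, hdiag]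
    ring
  · rw [if_pos (show i < i + m by omega), hinc hm, ← Nat.add_assoc]
    ring

end Operator

/-! ### Exchanging `i` and `i + 1` along a row -/

/-- The array `c` with the entries `(p, p + t)`, `d < t ≤ e`, of row `p` overwritten by `y`. -/
def fillRow (c : ℕ → ℕ → ℤ) (p d e : ℕ) (y : ℤ) : ℕ → ℕ → ℤ := fun r q ↦
  if r = p ∧ p + d < q ∧ q ≤ p + e then y else c r q

section FillRow

variable {K : Finset ℕ} {c : ℕ → ℕ → ℤ} {p d e : ℕ} {x y : ℤ}

theorem fillRow_of_mem {t : ℕ} (ht : t ∈ Finset.Ioc d e) : fillRow c p d e y p (p + t) = y := by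
  rw [Finset.mem_Ioc] at ht
  exact if_pos ⟨rfl, by omega, by omega⟩

theorem fillRow_of_ne {r : ℕ} (hr : r ≠ p) (q : ℕ) : fillRow c p d e y r q = c r q :=
  if_neg fun h ↦ hr h.1

theorem isKTab_fillRow (hc : IsKTab K c) (hleft : c p (p + d) ≤ y)
    (hright : p + (e + 1) ≤ K.card → y ≤ c p (p + (e + 1)))
    (habove : ∀ r q, 1 ≤ r → r + 1 = p → p + d < q → q ≤ p + e → c r q < y)
    (hbelow : ∀ q, p + d < q → q ≤ p + e → q ≤ K.card → y < c (p + 1) q) :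
    IsKTab K (fillRow c p d e y) := by
  refine ⟨fun r hr hrK ↦ ?_, fun r q hr hrq hq ↦ ?_, fun r q hr hrq hq ↦ ?_⟩
  · rw [← hc.1 r hr hrK]
    exact if_neg (by omega)
  · have hle := hc.2.1 r q hr hrq hq
    unfold fillRow
    split_ifs with h₁ h₂ h₂
    · exact le_rfl
    · obtain ⟨rfl, hdq, hqe⟩ := h₁
      obtain rfl : q = r + e := by omega
      exact hright hq
    · obtain ⟨rfl, hdq, hqe⟩ := h₂
      obtain rfl : q = r + d := by omega
      exact hleft
    · exact hle
  · have hlt := hc.2.2 r q hr hrq hq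
    unfold fillRow
    split_ifs with h₁ h₂ h₂
    · omega
    · obtain ⟨rfl, h₁⟩ := h₁
      exact hbelow q h₁.1 h₁.2 hq
    · exact habove r q hr h₂.1 h₂.2.1 h₂.2.2
    · exact hlt

theorem tabSum_fillRow (a : ℤ → ℤ → ℤ) (hp : 1 ≤ p) (hpK : p + e ≤ K.card)
    (hx : ∀ t ∈ Finset.Ioc d e, c p (p + t) = x) :
    tabSum a K (fillRow c p d e y) - tabSum a K c =
      ∑ t ∈ Finset.Ioc d e, (a y (y + t) - a x (x + t)) := by
  simp only [tabSum, ← Finset.sum_sub_distrib]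
  rw [Finset.sum_eq_single p]
  · refine (Finset.sum_of_injOn (p + ·) (add_right_injective p).injOn ?_ ?_ ?_).symm
    · intro t ht
      rw [Finset.mem_coe, Finset.mem_Ioc] at ht
      simp only [Finset.coe_Icc, Set.mem_Icc]
      omega
    · intro q _ hq
      have hnot : ¬(p = p ∧ p + d < q ∧ q ≤ p + e) := fun h ↦
        hq ⟨q - p, by rw [Finset.mem_coe, Finset.mem_Ioc]; omega, by dsimp only; omega⟩
      rw [fillRow, if_neg hnot, sub_self]
    · intro t ht
      rw [fillRow_of_mem ht, hx t ht, Nat.cast_add, add_sub_cancel_left]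
  · intro r _ hr
    simp only [fillRow_of_ne hr, sub_self, Finset.sum_const_zero]
  · intro hnot
    rw [Finset.mem_Icc] at hnot
    rw [Finset.Icc_eq_empty (by omega), Finset.sum_empty]

end FillRow

section Exchange

variable {n : ℕ} {a : ℤ → ℤ → ℤ} {i m : ℕ} {K : Finset ℕ} {c : ℕ → ℕ → ℤ}

theorem exists_isKTab_notMem_tabDiag (hm : i + m ≤ n + 1)
    (hmax : ∀ d < m, Astar n a i (i + d) ≤ Astar n a i (i + m)) (hK : i ∈ K ∨ i + 1 ∉ K)
    (hc : IsKTab K c) (hi : (i : ℤ) ∉ tabDiag K c (m + 1)) (hi' : (i : ℤ) + 1 ∈ tabDiag K c m) :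
    ∃ c', IsKTab K c' ∧ tabSum a K c' ≤ tabSum a K c ∧ (i : ℤ) + 1 ∉ tabDiag K c' m := by
  obtain ⟨p, hp, hpm, hpi⟩ := mem_tabDiag.1 hi'
  obtain ⟨d, -, hd⟩ := hc.exists_le_iff_le hp (by omega)
    (hc.diag_le_of_notMem_tabDiag_succ hK hp hpm hpi hi)
  have hdm : d < m := not_le.1 fun h ↦ by
    have := (hd m hpm).2 h
    omega
  have hrun : ∀ t ∈ Finset.Ioc d m, c p (p + t) = i + 1 := fun t ht ↦ by
    rw [Finset.mem_Ioc] at ht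
    have hgt := (hd t (by omega)).not.2 (by omega)
    have hle := hc.row_le hp (Nat.le_add_right p t) (Nat.add_le_add_left ht.2 p) hpm
    omega
  refine ⟨fillRow c p d m i, ?_, ?_, fun hmem ↦ ?_⟩
  · refine isKTab_fillRow hc ((hd d (by omega)).2 le_rfl) (fun h ↦ ?_) ?_ fun q hq hqm hqK ↦ ?_
    · have := (hd (m + 1) h).not.2 (by omega)
      omega
    · rintro r q hr rfl hq hqm
      exact hc.lt_of_notMem_tabDiag_succ hr hpm hpi hi (by omega) hqm
    · have hlt := hc.2.2 p q hp (by omega) hqK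
      obtain ⟨t, rfl⟩ := Nat.exists_eq_add_of_le (show p ≤ q by omega)
      have := hrun t (Finset.mem_Ioc.2 ⟨by omega, by omega⟩)
      omega
  · have hsum := tabSum_fillRow (y := i) a hp hpm hrun
    rw [← Astar_sub_Astar hdm.le hm] at hsum
    linarith [hmax d hdm]
  · obtain ⟨r, hr, hrm, hri⟩ := mem_tabDiag.1 hmem
    obtain rfl | hrp := eq_or_ne r p
    · rw [fillRow_of_mem (Finset.mem_Ioc.2 ⟨hdm, le_rfl⟩)] at hri
      omega
    · rw [fillRow_of_ne hrp] at hri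
      exact hrp ((hc.tabDiag_strictMonoOn m).injOn ⟨hr, by omega⟩ ⟨hp, by omega⟩
        (hri.trans hpi.symm))

theorem exists_isKTab_tabSum_lt
    (hmax : ∀ e, m < e → i + e ≤ n + 1 → Astar n a i (i + e) < Astar n a i (i + m))
    (hK : ∀ k ∈ K, k ≤ n + 1) (hc : IsKTab K c) (hi : (i : ℤ) ∈ tabDiag K c (m + 1))
    (hi' : (i : ℤ) + 1 ∉ tabDiag K c m) :
    ∃ c', IsKTab K c' ∧ tabSum a K c' < tabSum a K c := by
  obtain ⟨p, hp, hpm, hpi⟩ := mem_tabDiag.1 hi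
  have hdiag : c p p ≤ i := hpi ▸ hc.row_le hp le_rfl (Nat.le_add_right _ _) hpm
  obtain ⟨e, heK, he⟩ := hc.exists_le_iff_le hp (by omega) hdiag
  have hme : m < e := (he (m + 1) hpm).1 hpi.le
  have hrun : ∀ t ∈ Finset.Ioc m e, c p (p + t) = i := fun t ht ↦ by
    rw [Finset.mem_Ioc] at ht
    have hle := (he t (by omega)).2 ht.2
    have hge := hc.row_le hp (Nat.le_add_right p (m + 1)) (Nat.add_le_add_left ht.1 p) (by omega)
    omega
  have hen : i + e ≤ n + 1 := by
    have hupp := hc.add_le_kth hp heK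
    rw [hrun e (Finset.mem_Ioc.2 ⟨hme, le_rfl⟩)] at hupp
    have := hK _ (kth_mem (by omega) heK)
    omega
  refine ⟨fillRow c p m e (i + 1), ?_, ?_⟩
  · refine isKTab_fillRow hc ?_ (fun h ↦ ?_) ?_ fun q hq _ hqK ↦ ?_
    · have := (he m (by omega)).2 hme.le
      omega
    · have := (he (e + 1) h).not.2 (by omega)
      omega
    · rintro r q hr rfl hq hqe
      have hlt := hc.2.2 r q hr (by omega) (by omega)
      obtain ⟨t, rfl⟩ := Nat.exists_eq_add_of_le (show r + 1 ≤ q by omega)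
      have := hrun t (Finset.mem_Ioc.2 ⟨by omega, by omega⟩)
      omega
    · exact hc.lt_of_notMem_tabDiag hp hpi hi' hq hqK
  · have hsum := tabSum_fillRow (y := i + 1) a hp heK hrun
    have hneg := Astar_sub_Astar (a := a) hme.le hen
    rw [← neg_inj, ← Finset.sum_neg_distrib] at hneg
    simp only [neg_sub] at hneg
    linarith [hmax e hme hen]

end Exchange

/-! ### The effect of `ẽ_i^*` on `M_K` -/

section Main

variable {n : ℕ} {a : ℤ → ℤ → ℤ} {i : ℕ} {K : Finset ℕ}

theorem MK_etilStar_le (hi : 1 ≤ i) (hpos : 0 < epsStar n a i) (hne : K ≠ ∅)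
    (hfull : K ≠ Finset.Icc 1 (n + 1)) (hiK : i ∈ K ∨ i + 1 ∉ K) :
    MK n (etilStar n a i) K ≤ MK n a K := by
  obtain ⟨⟨hL, hLeps⟩, -⟩ := leStar_isGreatest hpos
  rw [Finset.mem_Icc] at hL
  obtain ⟨m, hm⟩ := Nat.exists_eq_add_of_le hL.1
  rw [hm] at hL hLeps
  rw [← add_zero (MK n a K)]
  refine MK_le_MK_add hne hfull 0 fun c hc ↦ ?_
  by_cases hexch : (i : ℤ) ∉ tabDiag K c (m + 1) ∧ (i : ℤ) + 1 ∈ tabDiag K c m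
  · obtain ⟨c', hc', hle, hnot⟩ := exists_isKTab_notMem_tabDiag (by omega)
      (fun d hd ↦ (Astar_le_epsStar (by omega) (by omega)).trans_eq hLeps.symm)
      hiK hc hexch.1 hexch.2
    refine ⟨c', hc', ?_⟩
    rw [tabValue_etilStar hi hm hc', if_neg hnot, tabValue, tabValue]
    split_ifs <;> omega
  · refine ⟨c, hc, ?_⟩
    rw [tabValue_etilStar hi hm hc]
    split_ifs <;> first | omega | tauto

theorem MK_le_MK_etilStar (hi : 1 ≤ i) (hpos : 0 < epsStar n a i) (hne : K ≠ ∅)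
    (hfull : K ≠ Finset.Icc 1 (n + 1)) (hK : ∀ k ∈ K, k ≤ n + 1) :
    MK n a K ≤ MK n (etilStar n a i) K := by
  obtain ⟨⟨hL, hLeps⟩, -⟩ := leStar_isGreatest hpos
  obtain ⟨m, hm⟩ := Nat.exists_eq_add_of_le (Finset.mem_Icc.1 hL).1
  rw [hm] at hLeps
  rw [← add_zero (MK n (etilStar n a i) K)]
  refine MK_le_MK_add hne hfull 0 fun c hc ↦ ?_
  rw [tabValue_etilStar hi hm hc]
  by_cases hexch : (i : ℤ) ∈ tabDiag K c (m + 1) ∧ (i : ℤ) + 1 ∉ tabDiag K c m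
  · obtain ⟨c', hc', hlt⟩ := exists_isKTab_tabSum_lt
      (fun e he hen ↦
      (Astar_lt_epsStar_of_leStar_lt hpos (by omega) hen).trans_eq hLeps.symm)
      hK hc hexch.1 hexch.2
    refine ⟨c', hc', ?_⟩
    rw [if_pos hexch.1, if_neg hexch.2, tabValue, tabValue]
    omega
  · refine ⟨c, hc, ?_⟩
    split_ifs <;> first | omega | tauto

theorem tabValue_etilStar_Icc (hi : 1 ≤ i) (hpos : 0 < epsStar n a i) {c : ℕ → ℕ → ℤ}
    (hc : IsKTab (Finset.Icc (i + 1) (n + 1)) c) :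
    tabValue (etilStar n a i) (Finset.Icc (i + 1) (n + 1)) c =
      tabValue a (Finset.Icc (i + 1) (n + 1)) c + 1 := by
  have hL := Finset.mem_Icc.1 (leStar_isGreatest hpos).1.1
  have hcard : (Finset.Icc (i + 1) (n + 1)).card = n + 1 - i := by rw [Nat.card_Icc]; omega
  obtain ⟨m, hm⟩ := Nat.exists_eq_add_of_le hL.1
  have hnot : (i : ℤ) ∉ tabDiag (Finset.Icc (i + 1) (n + 1)) c (m + 1) := fun h ↦ by
    obtain ⟨p, hp, hpm, hpi⟩ := mem_tabDiag.1 h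
    rw [hc.eq_add_of_Icc hp (by omega)] at hpi
    omega
  have hmem : (i : ℤ) + 1 ∈ tabDiag (Finset.Icc (i + 1) (n + 1)) c m :=
    mem_tabDiag.2 ⟨1, le_rfl, by omega, by simpa using hc.eq_add_of_Icc le_rfl (by omega)⟩
  rw [tabValue_etilStar hi hm hc, if_neg hnot, if_pos hmem, sub_zero]

theorem MK_etilStar_Icc (hi : 1 ≤ i) (hpos : 0 < epsStar n a i) :
    MK n (etilStar n a i) (Finset.Icc (i + 1) (n + 1)) =
      MK n a (Finset.Icc (i + 1) (n + 1)) + 1 := by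
  obtain ⟨l, hl, -⟩ := exists_Astar_eq_epsStar hpos
  rw [Finset.mem_Icc] at hl
  have hne : Finset.Icc (i + 1) (n + 1) ≠ ∅ := (Finset.nonempty_Icc.2 (by omega)).ne_empty
  have hfull : Finset.Icc (i + 1) (n + 1) ≠ Finset.Icc 1 (n + 1) := fun h ↦ by
    have h1 : 1 ∈ Finset.Icc (i + 1) (n + 1) := h ▸ Finset.mem_Icc.2 ⟨le_rfl, by omega⟩
    rw [Finset.mem_Icc] at h1
    omega
  apply le_antisymm
  · exact MK_le_MK_add hne hfull 1 fun c hc ↦ ⟨c, hc, (tabValue_etilStar_Icc hi hpos hc).le⟩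
  · rw [← le_sub_iff_add_le, sub_eq_add_neg]
    refine MK_le_MK_add hne hfull (-1) fun c hc ↦ ⟨c, hc, ?_⟩
    rw [tabValue_etilStar_Icc hi hpos hc, add_neg_cancel_right]

end Main

theorem stmt15_general (n : ℕ) (a : ℤ → ℤ → ℤ) (i : ℕ) (hi : 1 ≤ i) (hpos : 0 < epsStar n a i) :
    (∀ K : Finset ℕ, K ⊆ Finset.Icc 1 (n + 1) → K ≠ ∅ → K ≠ Finset.Icc 1 (n + 1) →
      (i ∈ K ∨ i + 1 ∉ K) → MK n (etilStar n a i) K = MK n a K) ∧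
    MK n (etilStar n a i) (Finset.Icc (i + 1) (n + 1)) =
      MK n a (Finset.Icc (i + 1) (n + 1)) + 1 := by
  refine ⟨fun K hK hne hfull hiK ↦ le_antisymm ?_ ?_, MK_etilStar_Icc hi hpos⟩
  · exact MK_etilStar_le hi hpos hne hfull hiK
  · exact MK_le_MK_etilStar hi hpos hne hfull fun k hk ↦ (Finset.mem_Icc.1 (hK hk)).2

/-- for every Lusztig datum `a` and `1 ≤ i ≤ n` with `ε_i^*(a) > 0`:
`M_K(ẽ_i^* a) = M_K(a)` for every `K ∈ M_n^×` with `i ∈ K` or `i+1 ∉ K`, and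
`M_{[i+1,n+1]}(ẽ_i^* a) = M_{[i+1,n+1]}(a) + 1`.  (Hence `Ψ` intertwines `ẽ_i^*` on `ℬ`
with the raising Kashiwara operator on `e`-BZ data.) -/
theorem stmt15 (n : ℕ) (hn : 1 ≤ n) (a : ℤ → ℤ → ℤ) (ha : IsLusztig n a)
    (i : ℕ) (hi1 : 1 ≤ i) (hi2 : i ≤ n) (hpos : 0 < epsStar n a i) :
    (∀ K : Finset ℕ, K ⊆ Finset.Icc 1 (n + 1) → K ≠ ∅ → K ≠ Finset.Icc 1 (n + 1) →
      (i ∈ K ∨ i + 1 ∉ K) → MK n (etilStar n a i) K = MK n a K) ∧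
    MK n (etilStar n a i) (Finset.Icc (i + 1) (n + 1)) =
      MK n a (Finset.Icc (i + 1) (n + 1)) + 1 :=
  stmt15_general n a i hi1 hpos
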